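/- Let s,s' ∈ Stacks(Σ) with s' = Pop₂ᵏ(s) for some k ∈ ℕ, and let ρ be a run of a level-2 collapsible pushdown system. Then ρ ∈ Runs(s,s') and ρ does not visit a substack of s' before its final configuration if and only if ρ ∈ Runs(s,s') and ρ decomposes as ρ = ρ₁∘ρ₂∘⋯∘ρ_n where each ρ_i is of one of the following forms: (F1) ρ_i is a return; (F2) ρ_i is a 1-loop followed by a Collapse of collapse level 2; (F3) ρ_i is a 1-loop followed by a Pop₁ or a Collapse of collapse level 1, and there is j>i such that ρ_j is of form F2 and ρ_k is of form F3 for all i<k<j. -/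

import Mathlib

namespace CPG

/-! ## Level-2 collapsible pushdown stacks -/

/-- Stack letters: `Sum.inl σ` is a letter with a level-1 link,
`Sum.inr (σ, k)` is a letter with a level-2 link to the substack of width `k`. -/
abbrev Letter (A : Type) := A ⊕ (A × ℕ)

def symOf {A : Type} : Letter A → A
  | Sum.inl a => a
  | Sum.inr (a, _) => a

def lvlOf {A : Type} : Letter A → ℕ
  | Sum.inl _ => 1
  | Sum.inr _ => 2

abbrev Word (A : Type) := List (Letter A)

/-- A 2-word: a list of words; the last word is the topmost one. -/
abbrev Stack2 (A : Type) := List (Word A)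

/-- The initial level-2 stack `⊥₂`. -/
def bottom2 {A : Type} (bot : A) : Stack2 A := [[Sum.inl bot]]

def top2 {A : Type} (s : Stack2 A) : Option (Word A) := s.getLast?

def top1 {A : Type} (s : Stack2 A) : Option (Letter A) := s.getLast?.bind List.getLast?

def symS {A : Type} (s : Stack2 A) : Option A := (top1 s).map symOf

def lvlS {A : Type} (s : Stack2 A) : Option ℕ := (top1 s).map lvlOf

def lnkS {A : Type} (s : Stack2 A) : Option ℕ :=
  match top1 s, top2 s with
  | some (Sum.inr (_, j)), _ => some j
  | some (Sum.inl _), some w => some (w.length - 1)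
  | _, _ => none

def clone2 {A : Type} (s : Stack2 A) : Option (Stack2 A) :=
  (top2 s).map fun w => s ++ [w]

def push1 {A : Type} [DecidableEq A] (bot a : A) (s : Stack2 A) : Option (Stack2 A) :=
  if a = bot then none else (top2 s).map fun w => s.dropLast ++ [w ++ [Sum.inl a]]

def push2 {A : Type} [DecidableEq A] (bot a : A) (s : Stack2 A) : Option (Stack2 A) :=
  if a = bot then none else
    (top2 s).map fun w => s.dropLast ++ [w ++ [Sum.inr (a, s.length - 1)]]

def pop2 {A : Type} (s : Stack2 A) : Option (Stack2 A) :=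
  if 1 < s.length then some s.dropLast else none

def pop1 {A : Type} (s : Stack2 A) : Option (Stack2 A) :=
  match s.getLast? with
  | some w => if 1 < w.length then some (s.dropLast ++ [w.dropLast]) else none
  | none => none

def collapse {A : Type} (s : Stack2 A) : Option (Stack2 A) :=
  match top1 s with
  | some (Sum.inr (_, k)) => if 0 < k then some (s.take k) else none
  | some (Sum.inl _) => pop1 s
  | none => none

/-- The level-2 stack operations. -/
inductive Op (A : Type) where
  | clone2 | pop1 | pop2 | collapse
  | push1 (a : A) | push2 (a : A)

def applyOp {A : Type} [DecidableEq A] (bot : A) : Op A → Stack2 A → Option (Stack2 A)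
  | .clone2 => clone2
  | .pop1 => pop1
  | .pop2 => pop2
  | .collapse => collapse
  | .push1 a => push1 bot a
  | .push2 a => push2 bot a

/-- `Stacks(Σ)` : the smallest set containing `⊥₂` and closed under the operations. -/
inductive IsStack {A : Type} [DecidableEq A] (bot : A) : Stack2 A → Prop where
  | base : IsStack bot (bottom2 bot)
  | step {s t : Stack2 A} (op : Op A) : IsStack bot s → applyOp bot op s = some t →
      IsStack bot t

/-- Iterated application of a partial stack operation. -/
def iter {A : Type} (f : Stack2 A → Option (Stack2 A)) : ℕ → Stack2 A → Option (Stack2 A)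
  | 0, s => some s
  | n + 1, s => (f s).bind (iter f n)

/-- `t` is a substack of `s`: `t = Pop₁ⁿ(Pop₂ᵐ(s))`. -/
def Substack {A : Type} (t s : Stack2 A) : Prop :=
  ∃ n m, (iter pop2 m s).bind (iter pop1 n) = some t

def ProperSubstack {A : Type} (t s : Stack2 A) : Prop := Substack t s ∧ t ≠ s

/-- `s` is a prefix of `t` (`s ⊑ t`). -/
def StackPrefix {A : Type} (s t : Stack2 A) : Prop :=
  s ≠ [] ∧ s.length ≤ t.length ∧ s.dropLast <+: t ∧
    ∀ j, s.length - 1 ≤ j → j < t.length → s.getLastD [] <+: t.getD j []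

/-- `t[s/u]` : the stack obtained from `t` by replacing the prefix `s` by `u`. -/
def substPrefix {A : Type} (t s u : Stack2 A) : Stack2 A :=
  u.dropLast ++
    (t.drop (s.length - 1)).map fun v => u.getLastD [] ++ v.drop (s.getLastD []).length

/-! ## Collapsible pushdown systems and runs -/

/-- A level-2 collapsible pushdown system. -/
structure CPS (Q A Γ : Type) where
  bot : A
  q0 : Q
  Δ : Set (Q × A × Γ × Q × Op A)

variable {Q A Γ : Type} [DecidableEq A]

/-- A `γ`-labelled transition realized by the operation `op`. -/
def TransOp (S : CPS Q A Γ) (γ : Γ) (op : Op A) (c c' : Q × Stack2 A) : Prop :=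
  ∃ σ : A, symS c.2 = some σ ∧ (c.1, σ, γ, c'.1, op) ∈ S.Δ ∧
    applyOp S.bot op c.2 = some c'.2

def Trans (S : CPS Q A Γ) (γ : Γ) (c c' : Q × Stack2 A) : Prop :=
  ∃ op, TransOp S γ op c c'

/-- A run of a collapsible pushdown system (recording configurations, labels and
operations of each step). -/
structure Run (S : CPS Q A Γ) where
  len : ℕ
  cfg : ℕ → Q × Stack2 A
  lab : ℕ → Γ
  op : ℕ → Op A
  ok : ∀ i, i < len → TransOp S (lab i) (op i) (cfg i) (cfg (i + 1))

def Run.stk {S : CPS Q A Γ} (ρ : Run S) (i : ℕ) : Stack2 A := (ρ.cfg i).2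

/-- The word of labels along a run. -/
def Run.labels {S : CPS Q A Γ} (ρ : Run S) : List Γ :=
  List.ofFn fun i : Fin ρ.len => ρ.lab i

/-- `Reach_L`-reachability: a run from `c` to `c'` labelled by a word in `L`. -/
def ReachL (S : CPS Q A Γ) (L : Language Γ) (c c' : Q × Stack2 A) : Prop :=
  ∃ ρ : Run S, ρ.cfg 0 = c ∧ ρ.cfg ρ.len = c' ∧ ρ.labels ∈ L

/-- Plain reachability. -/
def Reach (S : CPS Q A Γ) (c c' : Q × Stack2 A) : Prop :=
  ∃ ρ : Run S, ρ.cfg 0 = c ∧ ρ.cfg ρ.len = c'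

/-! ## ε-contraction -/

def oneLetterLang (γ : Γ) : Language Γ := {[γ]}

def nonEpsLang (eps : Γ) : Language Γ := {w | ∃ γ : Γ, γ ≠ eps ∧ w = [γ]}

/-- The language `{ε}*`. -/
def epsStar (eps : Γ) : Language Γ := KStar.kstar (oneLetterLang eps)

/-- The language `({ε}*(Γ∖{ε}))*`. -/
def domLang (eps : Γ) : Language Γ :=
  KStar.kstar (epsStar eps * nonEpsLang eps)

/-- The language `{ε}*γ`. -/
def edgeLang (eps γ : Γ) : Language Γ := epsStar eps * oneLetterLang γ

/-- The vertex set of the ε-contraction `G/ε`. -/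
def EpsDomain (S : CPS Q A Γ) (eps : Γ) : Set (Q × Stack2 A) :=
  {c | ReachL S (domLang eps) (S.q0, bottom2 S.bot) c}

/-! ## (Generalised) milestones and the order ≪ -/

/-- `wordAt bot s i` is the word `wᵢ` of `s`, with the convention `w₀ = ⊥`. -/
def wordAt {A : Type} (bot : A) (s : Stack2 A) (i : ℕ) : Word A :=
  if i = 0 then [Sum.inl bot] else s.getD (i - 1) []

/-- Longest common prefix of two words. -/
def lcp {α : Type} [DecidableEq α] : List α → List α → List α
  | a :: s, b :: t => if a = b then a :: lcp s t else []
  | _, _ => []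

/-- `m` is a generalised milestone of `s`. -/
def GenMilestone (bot : A) (s m : Stack2 A) : Prop :=
  ∃ i v, i < s.length ∧ m = s.take i ++ [v] ∧
    lcp (wordAt bot s i) (wordAt bot s (i + 1)) <+: v ∧
    (v <+: wordAt bot s i ∨ v <+: wordAt bot s (i + 1))

/-- `m` is a milestone of `s`. -/
def Milestone (bot : A) (s m : Stack2 A) : Prop :=
  ∃ i v, i < s.length ∧ m = s.take i ++ [v] ∧
    lcp (wordAt bot s i) (wordAt bot s (i + 1)) <+: v ∧
    v <+: wordAt bot s (i + 1)

def genMilestones (bot : A) (s : Stack2 A) : Set (Stack2 A) := {m | GenMilestone bot s m}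

def milestones (bot : A) (s : Stack2 A) : Set (Stack2 A) := {m | Milestone bot s m}

/-- The base cases of the partial order `≪`. -/
def llBase (bot : A) (s t : Stack2 A) : Prop :=
  s.length < t.length ∨
    (s ≠ [] ∧ s.length = t.length ∧ s.dropLast = t.dropLast ∧
      ((t.getLastD [] <+: s.getLastD [] ∧ t.getLastD [] ≠ s.getLastD [] ∧
          s.getLastD [] <+: wordAt bot s (s.length - 1)) ∨
        (s.getLastD [] <+: t.getLastD [] ∧ s.getLastD [] ≠ t.getLastD [] ∧
          ¬ t.getLastD [] <+: wordAt bot s (s.length - 1))))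

/-- The order `≪`: the smallest reflexive transitive relation containing `llBase`. -/
def ll (bot : A) : Stack2 A → Stack2 A → Prop := Relation.ReflTransGen (llBase bot)

/-- `m'` is the ≪-successor of `m` within `genMilestones bot s`. -/
def LlSuccessor (bot : A) (s m m' : Stack2 A) : Prop :=
  GenMilestone bot s m ∧ GenMilestone bot s m' ∧ m ≠ m' ∧ ll bot m m' ∧
    ∀ m'', GenMilestone bot s m'' → ll bot m m'' → m'' ≠ m → ll bot m' m''

/-! ## Loops, returns and 1-loops -/

/-- The segment `[i,j]` of `ρ` is a loop (of its initial stack). -/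
def LoopSeg {S : CPS Q A Γ} (ρ : Run S) (i j : ℕ) : Prop :=
  i ≤ j ∧ j ≤ ρ.len ∧ ρ.stk j = ρ.stk i ∧
    (∀ k, i ≤ k → k ≤ j → ∀ t, pop2 (ρ.stk i) = some t → ¬ Substack (ρ.stk k) t) ∧
    (∀ k, i ≤ k → k ≤ j → ∀ m, 0 < m → ∀ t, iter pop1 m (ρ.stk i) = some t →
      ρ.stk k = t → ∀ m', m' < m → ∃ t', iter pop1 m' (ρ.stk i) = some t' ∧
        lvlS t' = some 1)

/-- A high loop: a loop that never visits `Pop₁` of its stack. -/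
def HighLoopSeg {S : CPS Q A Γ} (ρ : Run S) (i j : ℕ) : Prop :=
  LoopSeg ρ i j ∧ ∀ k, i ≤ k → k ≤ j → ∀ t, pop1 (ρ.stk i) = some t → ρ.stk k ≠ t

/-- A low loop: a loop whose second and second-to-last stacks are `Pop₁` of its stack. -/
def LowLoopSeg {S : CPS Q A Γ} (ρ : Run S) (i j : ℕ) : Prop :=
  LoopSeg ρ i j ∧ i < j ∧
    ∃ t, pop1 (ρ.stk i) = some t ∧ ρ.stk (i + 1) = t ∧ ρ.stk (j - 1) = t

/-- The common part of the definition of a return on the segment `[i,j]`: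
it leads from its initial stack `t` to `Pop₂(t)` and never visits a substack
of `Pop₂(t)` before its final configuration. -/
def RetShell {S : CPS Q A Γ} (ρ : Run S) (i j : ℕ) : Prop :=
  i < j ∧ j ≤ ρ.len ∧ pop2 (ρ.stk i) = some (ρ.stk j) ∧
    ∀ k, i ≤ k → k < j → ¬ Substack (ρ.stk k) (ρ.stk j)

/-- The segment `[i,j]` of `ρ` is a return (from its initial stack `t` to `Pop₂(t)`). -/
inductive RetSeg {S : CPS Q A Γ} (ρ : Run S) : ℕ → ℕ → Prop where
  | pop2 {i j : ℕ} (h : RetShell ρ i j) (hop : ρ.op (j - 1) = Op.pop2) : RetSeg ρ i j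
  | collapse {i j : ℕ} (h : RetShell ρ i j) (hop : ρ.op (j - 1) = Op.collapse)
      (hpre : ∃ w w', top2 (ρ.stk i) = some w ∧ top2 (ρ.stk (j - 1)) = some w' ∧
        w <+: w' ∧ w ≠ w') : RetSeg ρ i j
  | sub {i k j : ℕ} (h : RetShell ρ i j) (hik : i < k) (hkj : k ≤ j)
      (hpop : pop1 (ρ.stk i) = some (ρ.stk k)) (hret : RetSeg ρ k j) : RetSeg ρ i j

/-- The segment `[i,j]` of `ρ` is a level-1-loop. -/
def OneLoopSeg {S : CPS Q A Γ} (ρ : Run S) (i j : ℕ) : Prop :=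
  i ≤ j ∧ j ≤ ρ.len ∧
    ∃ (s : Stack2 A) (w : Word A) (s' : Stack2 A),
      ρ.stk i = s ++ [w] ∧ ρ.stk j = s ++ s' ++ [w] ∧
      (∀ k, i ≤ k → k ≤ j → s.length < (ρ.stk k).length) ∧
      (∀ k, i ≤ k → k ≤ j → 1 < w.length → top2 (ρ.stk k) = some w.dropLast →
        ∃ m, k < m ∧ m ≤ j ∧ RetSeg ρ k m)

/-! ## ExRet, ExLoop, ... -/

/-- `w↓₀` : replace every level-2 link by `0`. -/
def down0 {A : Type} : Word A → Word A :=
  List.map fun a => match a with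
    | Sum.inl x => Sum.inl x
    | Sum.inr (x, _) => Sum.inr (x, 0)

def ExRet (S : CPS Q A Γ) (w : Word A) : Set (Q × Q) :=
  {p | ∃ ρ : Run S, ρ.cfg 0 = (p.1, [down0 w, down0 w]) ∧
    ρ.cfg ρ.len = (p.2, [down0 w]) ∧ RetSeg ρ 0 ρ.len}

def ExLoop (S : CPS Q A Γ) (w : Word A) : Set (Q × Q) :=
  {p | ∃ ρ : Run S, ρ.cfg 0 = (p.1, [down0 w]) ∧ ρ.cfg ρ.len = (p.2, [down0 w]) ∧
    LoopSeg ρ 0 ρ.len}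

def ExHLoop (S : CPS Q A Γ) (w : Word A) : Set (Q × Q) :=
  {p | ∃ ρ : Run S, ρ.cfg 0 = (p.1, [down0 w]) ∧ ρ.cfg ρ.len = (p.2, [down0 w]) ∧
    HighLoopSeg ρ 0 ρ.len}

def ExLLoop (S : CPS Q A Γ) (w : Word A) : Set (Q × Q) :=
  {p | ∃ ρ : Run S, ρ.cfg 0 = (p.1, [down0 w]) ∧ ρ.cfg ρ.len = (p.2, [down0 w]) ∧
    LowLoopSeg ρ 0 ρ.len}

def ExOneLoop (S : CPS Q A Γ) (w : Word A) : Set (Q × Q) :=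
  {p | ∃ (ρ : Run S) (s' : Stack2 A), ρ.cfg 0 = (p.1, [down0 w]) ∧
    ρ.cfg ρ.len = (p.2, s' ++ [down0 w]) ∧ OneLoopSeg ρ 0 ρ.len}

/-! ## Finite binary trees -/

/-- Finite binary trees with labels in `α` and optional left/right children. -/
inductive PTree (α : Type) where
  | node (a : α) (l r : Option (PTree α)) : PTree α

/-- The label of the node at address `d` (`false` = left/0, `true` = right/1). -/
def PTree.labelAt {α : Type} : PTree α → List Bool → Option α
  | .node a _ _, [] => some a
  | .node _ (some t) _, false :: d => t.labelAt d
  | .node _ none _, false :: _ => none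
  | .node _ _ (some t), true :: d => t.labelAt d
  | .node _ _ none, true :: _ => none

def PTree.map {α β : Type} (f : α → β) : PTree α → PTree β
  | .node a l r =>
    .node (f a)
      (match l with | none => none | some t => some (t.map f))
      (match r with | none => none | some t => some (t.map f))

/-- Convolution of two trees, with `none` as padding symbol `□`. -/
def PTree.conv {α β : Type} : PTree α → PTree β → PTree (Option α × Option β)
  | .node a l r, .node b l' r' =>
    .node (some a, some b)
      (match l, l' with
        | none, none => none
        | some t, none => some (t.map fun x => (some x, none))
        | none, some u => some (u.map fun x => (none, some x))
        | some t, some u => some (PTree.conv t u))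
      (match r, r' with
        | none, none => none
        | some t, none => some (t.map fun x => (some x, none))
        | none, some u => some (u.map fun x => (none, some x))
        | some t, some u => some (PTree.conv t u))

/-- A (bottom-up nondeterministic) finite tree automaton. -/
structure TreeAut (α : Type) where
  St : Type
  fin : Finite St
  qI : St
  F : Set St
  Δ : Set (St × α × St × St)

/-- Acceptance of a finite tree by a tree automaton. -/
def TreeAut.Accepts {α : Type} (M : TreeAut α) (t : PTree α) : Prop :=
  ∃ ρ : List Bool → M.St,
    (∀ d, t.labelAt d = none → ρ d = M.qI) ∧
    (∀ d a, t.labelAt d = some a → (ρ d, a, ρ (d ++ [false]), ρ (d ++ [true])) ∈ M.Δ) ∧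
    ρ [] ∈ M.F

/-- A family of binary relations on `B` is tree-automatic. -/
def IsTreeAutomatic {B : Type} {I : Type} (E : I → B → B → Prop) : Prop :=
  ∃ (α : Type) (_ : Finite α) (AB : TreeAut α) (AE : I → TreeAut (Option α × Option α))
    (f : {t : PTree α // AB.Accepts t} → B),
    Function.Bijective f ∧
      ∀ (i : I) (t₁ t₂ : {t : PTree α // AB.Accepts t}),
        (AE i).Accepts (PTree.conv t₁.1 t₂.1) ↔ E i (f t₁) (f t₂)

/-! ## The encoding of configurations as trees -/

/-- Labels of encoding trees: a state, a pair (symbol, link level), or `ε`. -/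
abbrev EncLabel (Q A : Type) := Q ⊕ ((A × ℕ) ⊕ Unit)

def epsLab {Q A : Type} : EncLabel Q A := Sum.inr (Sum.inr ())

def symLab {Q A : Type} (τ : Letter A) : EncLabel Q A := Sum.inr (Sum.inl (symOf τ, lvlOf τ))

/-- Encoding of blocklines as trees (with a fuel parameter driving the recursion;
the fuel used in `encStack` is large enough so that it never runs out on actual
blocklines). The left subtree encodes the blockline induced by the first maximal
block, the right subtree the remaining blocks. -/
def encBL (Q : Type) {A : Type} [DecidableEq A] :
    ℕ → EncLabel Q A → List (Word A) → PTree (EncLabel Q A)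
  | 0, σ, _ => .node σ none none
  | _ + 1, σ, [] => .node σ none none
  | fuel + 1, σ, w :: rest =>
    if w.length ≤ 1 then
      match rest with
      | [] => .node σ none none
      | _ :: _ => .node σ none (some (encBL Q fuel epsLab rest))
    else
      let p : Word A → Bool := fun v => decide (v.take 2 = w.take 2)
      let blk := (w :: rest).takeWhile p
      let restBlk := (w :: rest).dropWhile p
      .node σ
        (some (encBL Q fuel
          (match w[1]? with | some τ' => symLab τ' | none => epsLab)
          (blk.map List.tail)))
        (match restBlk with
          | [] => none
          | _ :: _ => some (encBL Q fuel epsLab restBlk))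

/-- The total number of letters of a 2-word. -/
def size2 {A : Type} (s : Stack2 A) : ℕ := (s.map List.length).sum

/-- The encoding `Enc(s) = Enc(s, (⊥,1))` of a stack. -/
def encStack (Q : Type) {A : Type} [DecidableEq A] (bot : A) (s : Stack2 A) :
    PTree (EncLabel Q A) :=
  encBL Q (size2 s + 1) (Sum.inr (Sum.inl (bot, 1))) s

/-- The encoding of a configuration: the state at the root, `Enc(s)` as left subtree. -/
def Enc {Q A : Type} [DecidableEq A] (bot : A) (c : Q × Stack2 A) : PTree (EncLabel Q A) :=
  .node (Sum.inl c.1) (some (encStack Q bot c.2)) none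

/-- The class `EncTrees` of encoding trees. -/
def EncTrees (Q A : Type) (bot : A) : Set (PTree (EncLabel Q A)) :=
  {T | (∃ q : Q, T.labelAt [] = some (Sum.inl q)) ∧
    T.labelAt [true] = none ∧ T.labelAt [false] ≠ none ∧
    T.labelAt [false] = some (Sum.inr (Sum.inl (bot, 1))) ∧
    (∀ (d : List Bool) (x : EncLabel Q A),
      T.labelAt (false :: (d ++ [false])) = some x →
        ∃ (σ : A) (l : ℕ), σ ≠ bot ∧ (l = 1 ∨ l = 2) ∧ x = Sum.inr (Sum.inl (σ, l))) ∧
    (∀ (d : List Bool) (x : EncLabel Q A), T.labelAt (d ++ [true]) = some x → x = epsLab) ∧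
    (∀ (d : List Bool) (σ : A), ¬ (T.labelAt (d ++ [false]) = some (Sum.inr (Sum.inl (σ, 1))) ∧
      T.labelAt (d ++ [true, false]) = some (Sum.inr (Sum.inl (σ, 1)))))}

/-- Restriction of a tree to the nodes lexicographically ≤ `d`. -/
def restrictLex {α : Type} : PTree α → List Bool → PTree α
  | .node a _ _, [] => .node a none none
  | .node a l _, false :: d =>
      .node a (match l with | none => none | some t => some (restrictLex t d)) none
  | .node a l r, true :: d =>
      .node a l (match r with | none => none | some t => some (restrictLex t d))

/-- The lexicographic order on tree addresses. -/
def lexLe (d e : List Bool) : Prop :=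
  d <+: e ∨ ∃ (c x y : List Bool), d = c ++ false :: x ∧ e = c ++ true :: y

/-! ## Deterministic finite automata with output (Moore machines) -/

structure Moore (α ω : Type) where
  St : Type
  fin : Finite St
  init : St
  step : St → α → St
  out : St → ω

def Moore.output {α ω : Type} (M : Moore α ω) (w : List α) : ω :=
  M.out (w.foldl M.step M.init)

/-- Form F2: a 1-loop followed by a collapse of collapse level 2. -/
def F2Seg {Q A Γ : Type} [DecidableEq A] {S : CPS Q A Γ} (ρ : Run S) (i j : ℕ) : Prop :=
  ∃ m, i ≤ m ∧ j = m + 1 ∧ j ≤ ρ.len ∧ OneLoopSeg ρ i m ∧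
    ρ.op m = Op.collapse ∧ lvlS (ρ.stk m) = some 2

/-- Form F3 (without the side condition): a 1-loop followed by a `Pop₁` or a collapse
of collapse level 1. -/
def F3Seg {Q A Γ : Type} [DecidableEq A] {S : CPS Q A Γ} (ρ : Run S) (i j : ℕ) : Prop :=
  ∃ m, i ≤ m ∧ j = m + 1 ∧ j ≤ ρ.len ∧ OneLoopSeg ρ i m ∧
    (ρ.op m = Op.pop1 ∨ (ρ.op m = Op.collapse ∧ lvlS (ρ.stk m) = some 1))

/-- A decomposition `ρ = ρ₁∘⋯∘ρ_n` into segments of the forms F1, F2, F3. -/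
def FormDecomp {Q A Γ : Type} [DecidableEq A] {S : CPS Q A Γ} (ρ : Run S) : Prop :=
  ∃ (n : ℕ) (idx : ℕ → ℕ), idx 0 = 0 ∧ idx n = ρ.len ∧
    (∀ i, i < n → idx i ≤ idx (i + 1)) ∧
    ∀ i, i < n →
      RetSeg ρ (idx i) (idx (i + 1)) ∨
      F2Seg ρ (idx i) (idx (i + 1)) ∨
      (F3Seg ρ (idx i) (idx (i + 1)) ∧
        ∃ j, i < j ∧ j < n ∧ F2Seg ρ (idx j) (idx (j + 1)) ∧
          ∀ k, i < k → k < j → F3Seg ρ (idx k) (idx (k + 1)))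

/-!
Not visiting a substack of `s'` before the end means that the width stays above `|s'|`. Cut such a
run at the positions where it first drops below the word that is then topmost. So let `w` be the
topmost word at some position, lying on `u`, and consider the first exit to width at most `|u|`.

* If this exit is a `Pop₂`, or a collapse along a link pushed above a copy of `w`, it ends exactly
  in `u`, because such a link was created at width more than `|u|`; this is a return.
* If it is a collapse along the last link of a copy of `w`, no letter of `w` having been removed
  for good, it ends a segment of form F2.
* Otherwise take the first step that removes the last letter of a copy of `w` such that the
  shortened word is not removed again before the exit. Up to this step the run is a segment of form
  F3, and after it the argument is repeated with `w` without its last letter. If the rest is a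
  return, so is the whole; otherwise it is a sequence of segments of form F3 ended by one of F2.

An exit that is not a return thus uses a link of `w`, hence goes to a width bounded by the links of
`w`. This bound makes the exits inside the first part returns, which is what a 1-loop requires.
Conversely, a link of `w` never points above `u`, so segments of form F3 followed by one of form F2
first drop below `w` in the final step.
-/

/-! ## Links and substacks -/

section Links

variable {A : Type} {s : Stack2 A} {w z : Word A} {m : ℕ}

/-- A word contains a level-2 link to the substack of width `m`. -/
def HasLink (w : Word A) (m : ℕ) : Prop := ∃ a, Sum.inr (a, m) ∈ w

lemma HasLink.mono (h : HasLink w m) (hwz : w ⊆ z) : HasLink z m :=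
  h.imp fun _ ha => hwz ha

/-- Every level-2 link of `s` points strictly below the word containing it. -/
def LinksBounded (s : Stack2 A) : Prop :=
  ∀ ⦃l z⦄, s[l]? = some z → ∀ m, HasLink z m → m ≤ l

lemma LinksBounded.le_length (h : LinksBounded (s ++ [w])) (hm : HasLink w m) :
    m ≤ s.length :=
  h (l := s.length) (by simp) m hm

lemma eq_or_prefix_dropLast (h : w <+: z) : w = z ∨ w <+: z.dropLast := by
  rcases List.eq_nil_or_concat z with rfl | ⟨v, a, rfl⟩
  · exact .inr h
  · simpa [List.prefix_concat_iff] using h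

end Links

section Substacks

variable {A : Type} {s t : Stack2 A} {w : Word A}

lemma pop1_append_eq_some_iff :
    pop1 (s ++ [w]) = some t ↔ 1 < w.length ∧ t = s ++ [w.dropLast] := by
  simp [pop1, eq_comm]

lemma pop2_eq_some_iff : pop2 s = some t ↔ t ≠ [] ∧ ∃ w, s = t ++ [w] := by
  rcases List.eq_nil_or_concat s with rfl | ⟨x, w, rfl⟩
  · simp [pop2]
  · have hpop : pop2 (x ++ [w]) = some t ↔ x ≠ [] ∧ x = t := by simp [pop2, List.length_pos_iff]
    rw [List.concat_eq_append, hpop]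
    refine ⟨fun ⟨hx, hxt⟩ => hxt ▸ ⟨hx, w, rfl⟩, fun ⟨ht, v, h⟩ => ?_⟩
    obtain ⟨rfl, -⟩ := List.append_inj' h rfl
    exact ⟨ht, rfl⟩

lemma length_eq_of_pop1 (h : pop1 s = some t) : t.length = s.length := by
  rcases List.eq_nil_or_concat s with rfl | ⟨x, w, rfl⟩
  · simp [pop1] at h
  · rw [List.concat_eq_append, pop1_append_eq_some_iff] at h
    simp [h.2]

lemma length_eq_of_iter_pop1 {n : ℕ} (h : iter pop1 n s = some t) : t.length = s.length := by
  induction n generalizing s with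
  | zero => simp_all [iter]
  | succ n ih =>
    obtain ⟨x, hx, hxt⟩ := Option.bind_eq_some_iff.1 h
    exact (ih hxt).trans (length_eq_of_pop1 hx)

lemma prefix_of_iter_pop2 {n : ℕ} (h : iter pop2 n s = some t) : t <+: s := by
  induction n generalizing s with
  | zero => simp_all [iter]
  | succ n ih =>
    obtain ⟨x, hx, hxt⟩ := Option.bind_eq_some_iff.1 h
    obtain ⟨-, w, rfl⟩ := pop2_eq_some_iff.1 hx
    exact (ih hxt).trans (List.prefix_append _ _)

lemma iter_pop2_append (ht : t ≠ []) (r : Stack2 A) : iter pop2 r.length (t ++ r) = some t := by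
  induction r using List.reverseRecOn with
  | nil => simp [iter]
  | append_singleton r w ih =>
    have hpop : pop2 (t ++ (r ++ [w])) = some (t ++ r) :=
      pop2_eq_some_iff.2 ⟨by simp [ht], w, by simp⟩
    simpa [iter, hpop] using ih

lemma Substack.of_isPrefix (ht : t ≠ []) (h : t <+: s) : Substack t s := by
  obtain ⟨r, rfl⟩ := h
  exact ⟨0, r.length, by simp [iter_pop2_append ht, iter]⟩

lemma Substack.length_le (h : Substack t s) : t.length ≤ s.length := by
  obtain ⟨n, m, h⟩ := h
  obtain ⟨x, hx, hxt⟩ := Option.bind_eq_some_iff.1 h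
  exact (length_eq_of_iter_pop1 hxt).trans_le (prefix_of_iter_pop2 hx).length_le

end Substacks

/-! ## Single stack operations -/

/-- The graph of the stack operations, with the topmost word split off; it serves to argue by cases
on `applyOp bot op s = some t`. The level of a collapse is read off the topmost letter. -/
inductive StackStep {A : Type} : Op A → Stack2 A → Stack2 A → Prop
  | clone2 (x : Stack2 A) (z : Word A) : StackStep .clone2 (x ++ [z]) (x ++ [z] ++ [z])
  | push1 (x : Stack2 A) (z : Word A) (a : A) :
      StackStep (.push1 a) (x ++ [z]) (x ++ [z ++ [Sum.inl a]])
  | push2 (x : Stack2 A) (z : Word A) (a : A) :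
      StackStep (.push2 a) (x ++ [z]) (x ++ [z ++ [Sum.inr (a, x.length)]])
  | pop1 (x : Stack2 A) {z : Word A} (hz : 1 < z.length) :
      StackStep .pop1 (x ++ [z]) (x ++ [z.dropLast])
  | collapse1 (x : Stack2 A) {z : Word A} (hz : z ≠ []) (a : A) :
      StackStep .collapse (x ++ [z ++ [Sum.inl a]]) (x ++ [z])
  | pop2 {x : Stack2 A} (hx : x ≠ []) (z : Word A) : StackStep .pop2 (x ++ [z]) x
  | collapse2 (x : Stack2 A) (z : Word A) (a : A) {m : ℕ} (hm : 0 < m) :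
      StackStep .collapse (x ++ [z ++ [Sum.inr (a, m)]]) ((x ++ [z ++ [Sum.inr (a, m)]]).take m)

/-- The operation `op` removes the topmost letter of `s`: it is a `Pop₁`, or a collapse of
collapse level 1. -/
def PopsLetter {A : Type} (op : Op A) (s : Stack2 A) : Prop :=
  op = .pop1 ∨ (op = .collapse ∧ lvlS s = some 1)

section StackOperations

variable {bot : A} {op : Op A} {s t : Stack2 A}

lemma ne_nil_of_applyOp (h : applyOp bot op s = some t) : s ≠ [] := by
  rintro rfl
  cases op <;> simp [applyOp, clone2, push1, push2, pop1, pop2, collapse, top1, top2] at h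

lemma stackStep_of_applyOp (h : applyOp bot op s = some t) : StackStep op s t := by
  rcases List.eq_nil_or_concat s with hs | ⟨x, z, hs⟩
  · exact absurd hs (ne_nil_of_applyOp h)
  rw [List.concat_eq_append] at hs
  subst hs
  cases op <;> simp only [applyOp] at h
  case clone2 =>
    obtain rfl : t = x ++ [z] ++ [z] := by simpa [clone2, top2, eq_comm] using h
    exact .clone2 x z
  case pop1 =>
    obtain ⟨hz, rfl⟩ := pop1_append_eq_some_iff.1 h
    exact .pop1 x hz
  case pop2 =>
    obtain ⟨hx, rfl⟩ : x ≠ [] ∧ x = t := by simpa [pop2, List.length_pos_iff] using h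
    exact .pop2 hx z
  case collapse =>
    rcases List.eq_nil_or_concat z with rfl | ⟨v, a | ⟨a, m⟩, rfl⟩
    · simp [collapse, top1] at h
    · obtain ⟨hv, rfl⟩ : v ≠ [] ∧ x ++ [v] = t := by
        simpa [collapse, top1, pop1, List.length_pos_iff] using h
      simpa using StackStep.collapse1 x hv a
    · obtain ⟨hm, rfl⟩ : 0 < m ∧ (x ++ [v ++ [Sum.inr (a, m)]]).take m = t := by
        simpa [collapse, top1] using h
      simpa using StackStep.collapse2 x v a hm
  case push1 a =>
    obtain ⟨-, rfl⟩ : a ≠ bot ∧ x ++ [z ++ [Sum.inl a]] = t := by simpa [push1, top2] using h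
    exact .push1 x z a
  case push2 a =>
    obtain ⟨-, rfl⟩ : a ≠ bot ∧ x ++ [z ++ [Sum.inr (a, x.length)]] = t := by
      simpa [push2, top2] using h
    exact .push2 x z a

lemma pop1_eq_of_popsLetter (hop : PopsLetter op s) (h : applyOp bot op s = some t) :
    pop1 s = some t := by
  rcases hop with rfl | ⟨rfl, hlvl⟩
  · exact h
  · cases stackStep_of_applyOp h with
    | collapse1 x hz a => simpa [applyOp, collapse, top1] using h
    | collapse2 x z a hm => simp [lvlS, top1, lvlOf] at hlvl

lemma applyOp_ne_nil (h : applyOp bot op s = some t) : t ≠ [] := by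
  cases stackStep_of_applyOp h
  case pop2 _ hx => exact hx
  case collapse2 x z a m hm => simp [hm.ne']
  all_goals simp

lemma pop2_or_collapse_of_length_lt (h : applyOp bot op s = some t) (hlt : t.length < s.length) :
    (op = .pop2 ∧ t.length + 1 = s.length) ∨
      (op = .collapse ∧ ∃ x z a m, s = x ++ [z ++ [Sum.inr (a, m)]] ∧ t = s.take m) := by
  cases stackStep_of_applyOp h
  case pop2 => simp
  case collapse2 x z a m hm => exact .inr ⟨rfl, x, z, a, m, rfl, rfl⟩
  all_goals simp only [List.length_append, List.length_singleton] at hlt; omega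

lemma take_eq_take_of_applyOp (h : applyOp bot op s = some t) {n : ℕ} (hs : n < s.length)
    (ht : n ≤ t.length) : t.take n = s.take n := by
  cases stackStep_of_applyOp h
  case collapse2 x z a m hm =>
    rw [List.take_take, min_eq_left (ht.trans (List.length_take_le _ _))]
  all_goals
    simp only [List.length_append, List.length_singleton, Nat.lt_succ_iff] at hs
    simp [List.take_append_of_le_length hs]

lemma exists_hasLink_of_collapse {w : Word A} (hlvl : lvlS (s ++ [w]) = some 2)
    (h : applyOp bot .collapse (s ++ [w]) = some t) :
    ∃ m, HasLink w m ∧ t = (s ++ [w]).take m := by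
  rcases List.eq_nil_or_concat w with rfl | ⟨v, a | ⟨a, m⟩, rfl⟩
  · simp [lvlS, top1] at hlvl
  · simp [lvlS, top1, lvlOf] at hlvl
  · obtain ⟨-, rfl⟩ : 0 < m ∧ (s ++ [v ++ [Sum.inr (a, m)]]).take m = t := by
      simpa [applyOp, collapse, top1] using h
    exact ⟨m, ⟨a, by simp⟩, by simp⟩

/-- Words are traced back through a step; the truncation of the index by `min` makes the copy
produced by `Clone₂` stem from the word it duplicates. -/
lemma exists_origin_of_applyOp (h : applyOp bot op s = some t) {l : ℕ} {z : Word A}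
    (hz : t[l]? = some z) :
    ∃ v, s[min l (s.length - 1)]? = some v ∧
      (z = v ∨ (∃ b, z = v ++ [b] ∧ ∀ m, HasLink [b] m → m = l) ∨
        (z = v.dropLast ∧ PopsLetter op s ∧ ∃ x, s = x ++ [v] ∧ l = x.length)) := by
  cases stackStep_of_applyOp h
  case clone2 x v => grind
  case push1 x v a =>
    have : ∀ m, HasLink [Sum.inl a] m → m = l := by simp [HasLink]
    grind
  case push2 x v a =>
    have : ∀ m, HasLink [Sum.inr (a, x.length)] m → m = x.length := by simp [HasLink]
    grind
  case pop1 x v hv =>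
    have : PopsLetter Op.pop1 (x ++ [v]) := .inl rfl
    grind
  case collapse1 x v hv a =>
    have : PopsLetter Op.collapse (x ++ [v ++ [Sum.inl a]]) :=
      .inr ⟨rfl, by simp [lvlS, top1, lvlOf]⟩
    grind
  case pop2 hx v => grind
  case collapse2 x v a hm => grind

lemma LinksBounded.of_applyOp (hs : LinksBounded s) (h : applyOp bot op s = some t) :
    LinksBounded t := by
  intro l z hz m hm
  obtain ⟨v, hv, rfl | ⟨b, rfl, hb⟩ | ⟨rfl, -⟩⟩ := exists_origin_of_applyOp h hz
  · exact (hs hv m hm).trans (min_le_left _ _)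
  · obtain ⟨a, ha⟩ := hm
    rcases List.mem_append.1 ha with ha | ha
    · exact (hs hv m ⟨a, ha⟩).trans (min_le_left _ _)
    · exact (hb m ⟨a, ha⟩).le
  · exact (hs hv m (hm.mono (List.dropLast_subset _))).trans (min_le_left _ _)

lemma IsStack.linksBounded (hs : IsStack bot s) : LinksBounded s := by
  induction hs with
  | base =>
    intro l z hz m ⟨a, ha⟩
    grind [bottom2]
  | step op _ h ih => exact ih.of_applyOp h

end StackOperations

/-! ## Widths along a run -/

/-- The stacks of `ρ` at the positions in `[i, j)` are wider than `n`. -/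
def StaysAbove {S : CPS Q A Γ} (ρ : Run S) (n i j : ℕ) : Prop :=
  ∀ k, i ≤ k → k < j → n < (ρ.stk k).length

/-- After position `i` the run `ρ` reaches width at most `n` for the first time at `p`. -/
structure Exit {S : CPS Q A Γ} (ρ : Run S) (n i p : ℕ) : Prop where
  lt : i < p
  le_len : p ≤ ρ.len
  staysAbove : StaysAbove ρ n i p
  length_le : (ρ.stk p).length ≤ n

section Widths

variable {S : CPS Q A Γ} {ρ : Run S} {n i j k p : ℕ}

lemma Run.applyOp_eq (ρ : Run S) (hi : i < ρ.len) :
    applyOp S.bot (ρ.op i) (ρ.stk i) = some (ρ.stk (i + 1)) := by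
  obtain ⟨-, -, -, h⟩ := ρ.ok i hi
  exact h

lemma Run.stk_ne_nil (ρ : Run S) (hlen : 0 < ρ.len) (hi : i ≤ ρ.len) : ρ.stk i ≠ [] := by
  cases i with
  | zero => exact ne_nil_of_applyOp (ρ.applyOp_eq hlen)
  | succ i => exact applyOp_ne_nil (ρ.applyOp_eq hi)

lemma linksBounded_stk (hij : i ≤ j) (hj : j ≤ ρ.len) (hi : LinksBounded (ρ.stk i)) :
    LinksBounded (ρ.stk j) := by
  induction j, hij using Nat.le_induction with
  | base => exact hi
  | succ j _ ih => exact (ih (by omega)).of_applyOp (ρ.applyOp_eq hj)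

lemma StaysAbove.mono {n' i' j' : ℕ} (h : StaysAbove ρ n i j) (hn : n' ≤ n) (hi : i ≤ i')
    (hj : j' ≤ j) : StaysAbove ρ n' i' j' :=
  fun k hk hkj => hn.trans_lt (h k (hi.trans hk) (hkj.trans_le hj))

lemma staysAbove_succ_iff : StaysAbove ρ n i (i + 1) ↔ n < (ρ.stk i).length := by
  simp [StaysAbove, ← and_imp, ← le_antisymm_iff]

lemma StaysAbove.trans (hij : StaysAbove ρ n i j) (hjk : StaysAbove ρ n j k) :
    StaysAbove ρ n i k :=
  fun l hl hlk => (lt_or_ge l j).elim (hij l hl) (hjk l · hlk)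

lemma StaysAbove.take_eq (h : StaysAbove ρ n i j) (hij : i ≤ j) (hj : j ≤ ρ.len)
    (hn : n ≤ (ρ.stk j).length) : (ρ.stk j).take n = (ρ.stk i).take n := by
  induction j, hij using Nat.le_induction with
  | base => rfl
  | succ j hij ih =>
    have hnj : n < (ρ.stk j).length := h j hij j.lt_succ_self
    rw [take_eq_take_of_applyOp (ρ.applyOp_eq hj) hnj hn]
    exact ih (h.mono le_rfl le_rfl j.le_succ) (by omega) hnj.le

lemma StaysAbove.isPrefix (h : StaysAbove ρ (ρ.stk j).length i j) (hij : i ≤ j) (hj : j ≤ ρ.len) :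
    ρ.stk j <+: ρ.stk i := by
  have htake := h.take_eq hij hj le_rfl
  rw [List.take_length] at htake
  exact htake ▸ List.take_prefix _ _

lemma StaysAbove.take_eq_of_stk_eq {u : Stack2 A} {w : Word A} (h : StaysAbove ρ u.length i j)
    (hi : ρ.stk i = u ++ [w]) (hij : i ≤ j) (hj : j ≤ ρ.len) (hu : u.length ≤ (ρ.stk j).length) :
    (ρ.stk j).take u.length = u := by
  rw [h.take_eq hij hj hu, hi, List.take_left]

lemma StaysAbove.exists_eq_append {u x : Stack2 A} {w z : Word A}
    (h : StaysAbove ρ u.length i (j + 1)) (hi : ρ.stk i = u ++ [w]) (hij : i ≤ j)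
    (hj : j ≤ ρ.len) (hjx : ρ.stk j = x ++ [z]) : ∃ y, x = u ++ y := by
  have hlt : u.length < (ρ.stk j).length := h j hij j.lt_succ_self
  have htake := (h.mono le_rfl le_rfl j.le_succ).take_eq_of_stk_eq hi hij hj hlt.le
  have hux : u.length ≤ x.length := by simpa [hjx, Nat.lt_succ_iff] using hlt
  rw [hjx, List.take_append_of_le_length hux] at htake
  exact ⟨x.drop u.length, by simpa [htake] using (List.take_append_drop u.length x).symm⟩

lemma staysAbove_or_exists_exit (hi : n < (ρ.stk i).length) (hj : j ≤ ρ.len) :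
    StaysAbove ρ n i (j + 1) ∨ ∃ p ≤ j, Exit ρ n i p := by
  classical
  by_cases hex : ∃ p, i ≤ p ∧ p ≤ j ∧ (ρ.stk p).length ≤ n
  · obtain ⟨hip, hpj, hp⟩ := Nat.find_spec hex
    have habove : StaysAbove ρ n i (Nat.find hex) := fun k hik hk =>
      not_le.1 fun hkn => Nat.find_min hex hk ⟨hik, hk.le.trans hpj, hkn⟩
    have hne : i ≠ Nat.find hex := fun heq => hi.not_ge (heq ▸ hp)
    exact .inr ⟨_, hpj, hip.lt_of_ne hne, hpj.trans hj, habove, hp⟩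
  · exact .inl fun k hik hkj => not_le.1 fun hkn => hex ⟨k, hik, Nat.le_of_lt_succ hkj, hkn⟩

lemma Exit.prepend (h : Exit ρ n j p) (hij : i ≤ j) (habove : StaysAbove ρ n i j) :
    Exit ρ n i p :=
  ⟨hij.trans_lt h.lt, h.le_len, habove.trans h.staysAbove, h.length_le⟩

lemma Exit.at_length (h : Exit ρ n i p) : Exit ρ (ρ.stk p).length i p :=
  ⟨h.lt, h.le_len, h.staysAbove.mono h.length_le le_rfl le_rfl, le_rfl⟩

lemma Exit.stk_eq {u : Stack2 A} {w : Word A} (h : Exit ρ u.length i p)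
    (hi : ρ.stk i = u ++ [w]) (hu : u.length ≤ (ρ.stk p).length) : ρ.stk p = u := by
  rw [← h.staysAbove.take_eq_of_stk_eq hi h.lt.le h.le_len hu, List.take_of_length_le h.length_le]

lemma forall_not_substack_iff (hj : j ≤ ρ.len) (hpre : ρ.stk j <+: ρ.stk i) :
    (∀ k, i ≤ k → k < j → ¬ Substack (ρ.stk k) (ρ.stk j)) ↔
      StaysAbove ρ (ρ.stk j).length i j := by
  refine ⟨fun hnot k => ?_, fun habove k hik hkj hsub =>
    (habove k hik hkj).not_ge hsub.length_le⟩
  induction k using Nat.strong_induction_on with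
  | h k ih =>
    refine fun hik hkj => not_le.1 fun hle => hnot k hik hkj ?_
    have habove : StaysAbove ρ (ρ.stk k).length i k := fun l hil hlk =>
      hle.trans_lt (ih l hlk hil (hlk.trans hkj))
    exact Substack.of_isPrefix (ρ.stk_ne_nil (by omega) (by omega))
      (List.prefix_of_prefix_length_le (habove.isPrefix hik (by omega)) hpre hle)

end Widths

/-! ## Returns and 1-loops -/

section Returns

variable {S : CPS Q A Γ} {ρ : Run S} {u y : Stack2 A} {w : Word A} {i k p : ℕ}

lemma Exit.retShell (h : Exit ρ u.length i p) (hi : ρ.stk i = u ++ [w]) (hp : ρ.stk p = u) :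
    RetShell ρ i p := by
  subst hp
  have hne : ρ.stk p ≠ [] := ρ.stk_ne_nil (h.lt.trans_le h.le_len).pos h.le_len
  refine ⟨h.lt, h.le_len, pop2_eq_some_iff.2 ⟨hne, w, hi⟩, ?_⟩
  exact (forall_not_substack_iff h.le_len (hi ▸ List.prefix_append _ _)).2 h.staysAbove

lemma RetSeg.retShell (h : RetSeg ρ i p) : RetShell ρ i p := by
  cases h <;> assumption

lemma RetSeg.exists_stk_eq (h : RetSeg ρ i p) : ∃ w, ρ.stk i = ρ.stk p ++ [w] :=
  (pop2_eq_some_iff.1 h.retShell.2.2.1).2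

lemma RetSeg.exit (h : RetSeg ρ i p) : Exit ρ (ρ.stk p).length i p := by
  obtain ⟨w, hw⟩ := h.exists_stk_eq
  obtain ⟨hip, hp, -, hnot⟩ := h.retShell
  exact ⟨hip, hp, (forall_not_substack_iff hp (hw ▸ List.prefix_append _ _)).1 hnot, le_rfl⟩

lemma RetSeg.exit_of_stk_eq (h : RetSeg ρ i p) (hi : ρ.stk i = u ++ [w]) :
    Exit ρ u.length i p ∧ ρ.stk p = u := by
  obtain ⟨v, hv⟩ := h.exists_stk_eq
  obtain rfl : ρ.stk p = u := (List.append_inj' (hv.symm.trans hi) rfl).1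
  exact ⟨h.exit, rfl⟩

lemma RetSeg.of_pop1 (h : RetSeg ρ k p) (hexit : Exit ρ u.length i p) (hi : ρ.stk i = u ++ [w])
    (hik : i < k) (hw : 1 < w.length) (hk : ρ.stk k = u ++ y ++ [w.dropLast]) : RetSeg ρ i p := by
  obtain ⟨hkp, hp⟩ := h.exit_of_stk_eq hk
  obtain rfl : y = [] := by simpa [hp] using hexit.length_le
  rw [List.append_nil] at hk hp
  refine .sub (hexit.retShell hi hp) hik hkp.lt.le ?_ h
  rw [hi, hk, pop1_append_eq_some_iff]
  exact ⟨hw, rfl⟩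

end Returns

/-! ## The words above a fixed width -/

/-- Step `k` of `ρ` removes the topmost letter of the word `w` lying on `x`, and up to position `j`
the shortened word is not removed again. -/
structure PendingPop {S : CPS Q A Γ} (ρ : Run S) (w : Word A) (k j : ℕ) (x : Stack2 A) : Prop where
  lt : k < j
  stk_eq : ρ.stk k = x ++ [w]
  pops : PopsLetter (ρ.op k) (ρ.stk k)
  staysAbove : StaysAbove ρ x.length (k + 1) (j + 1)

section PendingPops

variable {S : CPS Q A Γ} {ρ : Run S} {u x y : Stack2 A} {w z : Word A} {i j k p : ℕ}

lemma PendingPop.extend (h : PendingPop ρ w k i x) (hij : i ≤ j)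
    (habove : StaysAbove ρ x.length (i + 1) (j + 1)) : PendingPop ρ w k j x :=
  ⟨h.lt.trans_le hij, h.stk_eq, h.pops, h.staysAbove.trans habove⟩

lemma PendingPop.trans (h : PendingPop ρ w i k x) (h' : PendingPop ρ w k j y) :
    PendingPop ρ w i j x := by
  refine h.extend h'.lt.le (h'.staysAbove.mono ?_ le_rfl le_rfl)
  have hlt : x.length < (ρ.stk k).length := h.staysAbove k h.lt k.lt_succ_self
  simpa [h'.stk_eq, Nat.lt_succ_iff] using hlt

lemma PendingPop.stk_succ (h : PendingPop ρ w k j x) (hj : j ≤ ρ.len) :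
    1 < w.length ∧ ρ.stk (k + 1) = x ++ [w.dropLast] := by
  have hpop := pop1_eq_of_popsLetter h.pops (ρ.applyOp_eq (h.lt.trans_le hj))
  rwa [h.stk_eq, pop1_append_eq_some_iff] at hpop

lemma prefix_or_pendingPop (hi : ρ.stk i = u ++ [w]) (hij : i ≤ j) (hj : j ≤ ρ.len)
    (habove : StaysAbove ρ u.length i j) {l : ℕ} (hl : u.length ≤ l) (hz : (ρ.stk j)[l]? = some z) :
    w <+: z ∨ ∃ k x, i ≤ k ∧ PendingPop ρ w k j x ∧ x.length ≤ l := by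
  induction j, hij using Nat.le_induction generalizing l z with
  | base => grind
  | succ j hij ih =>
    have hlt : l < (ρ.stk (j + 1)).length := (List.getElem?_eq_some_iff.1 hz).1
    have hu : u.length < (ρ.stk j).length := habove j hij j.lt_succ_self
    obtain ⟨v, hv, hzv⟩ := exists_origin_of_applyOp (ρ.applyOp_eq hj) hz
    rcases ih (by omega) (habove.mono le_rfl le_rfl j.le_succ) (by omega) hv with
      hwv | ⟨k, x, hik, hpend, hx⟩
    · rcases hzv with rfl | ⟨b, rfl, -⟩ | ⟨rfl, hpops, x, hx, rfl⟩
      · exact .inl hwv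
      · exact .inl (hwv.trans (List.prefix_append _ _))
      · rcases eq_or_prefix_dropLast hwv with rfl | hwv
        · refine .inr ⟨j, x, hij, ⟨j.lt_succ_self, hx, hpops, ?_⟩, le_rfl⟩
          exact staysAbove_succ_iff.2 hlt
        · exact .inl hwv
    · refine .inr ⟨k, x, hik, hpend.extend j.le_succ (staysAbove_succ_iff.2 ?_), by omega⟩
      omega

lemma length_le_of_hasLink_drop (hi : ρ.stk i = u ++ [w]) (hij : i ≤ j) (hj : j ≤ ρ.len)
    (habove : StaysAbove ρ u.length i j) {l m : ℕ} (hl : u.length ≤ l)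
    (hz : (ρ.stk j)[l]? = some z) (hm : HasLink (z.drop w.length) m) : u.length ≤ m := by
  induction j, hij using Nat.le_induction generalizing l z with
  | base =>
    obtain rfl : z = w := by grind
    simp [HasLink] at hm
  | succ j hij ih =>
    have hu : u.length < (ρ.stk j).length := habove j hij j.lt_succ_self
    obtain ⟨v, hv, hzv⟩ := exists_origin_of_applyOp (ρ.applyOp_eq hj) hz
    have hvm : HasLink (v.drop w.length) m → u.length ≤ m :=
      ih (by omega) (habove.mono le_rfl le_rfl j.le_succ) (by omega) hv
    rcases hzv with rfl | ⟨b, rfl, hb⟩ | ⟨rfl, -⟩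
    · exact hvm hm
    · obtain ⟨a, ha⟩ := hm
      rcases List.mem_append.1 (List.drop_append ▸ ha) with ha | ha
      · exact hvm ⟨a, ha⟩
      · exact hl.trans_eq (hb m ⟨a, List.mem_of_mem_drop ha⟩).symm
    · rw [← List.dropLast_drop_eq_drop_dropLast] at hm
      exact hvm (hm.mono (List.dropLast_subset _))

end PendingPops

/-! ## The first exit below the current word -/

/-- A sequence of segments of form F3 followed by a segment of form F2. -/
def Chain {S : CPS Q A Γ} (ρ : Run S) (i p : ℕ) : Prop :=
  ∃ k, Relation.ReflTransGen (F3Seg ρ) i k ∧ F2Seg ρ k p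

/-- Within the positions `[i, k]` of `ρ`, every first exit below an occurrence of the word `v` as
topmost word is a return. -/
def ExitsAreReturns {S : CPS Q A Γ} (ρ : Run S) (v : Word A) (i k : ℕ) : Prop :=
  ∀ ⦃j m y⦄, i ≤ j → m ≤ k → ρ.stk j = y ++ [v] → Exit ρ y.length j m → RetSeg ρ j m

section FirstExit

variable {S : CPS Q A Γ} {ρ : Run S} {u x : Stack2 A} {w z : Word A} {a : A} {b i j k m p q : ℕ}

lemma Chain.head (hij : F3Seg ρ i j) (h : Chain ρ j p) : Chain ρ i p :=
  h.imp fun _ hk => ⟨.head hij hk.1, hk.2⟩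

lemma oneLoopSeg_of_forall_not_pendingPop (hi : ρ.stk i = u ++ [w]) (hik : i ≤ k) (hk : k ≤ ρ.len)
    (htop : ρ.stk k = x ++ [w]) (habove : StaysAbove ρ u.length i (k + 1))
    (hnot : ∀ j ≥ i, ∀ y, ¬ PendingPop ρ w j k y)
    (hret : ExitsAreReturns ρ w.dropLast i k) : OneLoopSeg ρ i k := by
  obtain ⟨s', rfl⟩ := habove.exists_eq_append hi hik hk htop
  refine ⟨hik, hk, u, w, s', hi, htop, fun j hij hjk => habove j hij (by omega), ?_⟩
  intro j hij hjk hw hj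
  obtain ⟨y, hy⟩ := List.getLast?_eq_some_iff.1 hj
  have huy : u.length ≤ y.length := by
    simpa [hy, Nat.lt_succ_iff] using habove j hij (by omega)
  obtain ⟨r, v, hir, hpend, hvy⟩ : ∃ r v, i ≤ r ∧ PendingPop ρ w r j v ∧ v.length ≤ y.length := by
    refine (prefix_or_pendingPop hi hij (hjk.trans hk) (habove.mono le_rfl le_rfl (by omega)) huy
      (z := w.dropLast) (by simp [hy])).resolve_left fun hpre => ?_
    have := hpre.length_le
    rw [List.length_dropLast] at this
    omega
  rcases staysAbove_or_exists_exit (n := y.length) (i := j) (by simp [hy]) hk with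
    hy' | ⟨m, hmk, hm⟩
  · exact absurd (hpend.extend hjk (hy'.mono hvy j.le_succ le_rfl)) (hnot r hir v)
  · exact ⟨m, hm.lt, hmk, hret hij hmk hy hm⟩

lemma exists_f3Seg_of_pendingPop (hexit : Exit ρ u.length i (q + 1)) (hi : ρ.stk i = u ++ [w])
    (hret : ExitsAreReturns ρ w.dropLast i q) (hpend : ∃ k ≥ i, ∃ x, PendingPop ρ w k q x) :
    ∃ k ≥ i, F3Seg ρ i (k + 1) ∧ 1 < w.length ∧ ∃ y,
      ρ.stk (k + 1) = u ++ y ++ [w.dropLast] ∧ Exit ρ (u ++ y).length (k + 1) (q + 1) := by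
  classical
  obtain ⟨hik, x, hk⟩ := Nat.find_spec hpend
  have hfirst : ∀ j < Nat.find hpend, ¬ (j ≥ i ∧ ∃ x, PendingPop ρ w j q x) := fun j =>
    Nat.find_min hpend
  generalize Nat.find hpend = k at hik hk hfirst
  have hkq : k < q := hk.lt
  have hq : q < ρ.len := hexit.le_len
  have habove : StaysAbove ρ u.length i (k + 1) :=
    hexit.staysAbove.mono le_rfl le_rfl (by omega)
  obtain ⟨y, rfl⟩ := habove.exists_eq_append hi hik (by omega) hk.stk_eq
  have hloop : OneLoopSeg ρ i k :=
    oneLoopSeg_of_forall_not_pendingPop hi hik (by omega) hk.stk_eq habove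
      (fun j hij y hj => hfirst j hj.lt ⟨hij, y, hj.trans hk⟩)
      (fun j m y hij hmk => hret hij (by omega))
  obtain ⟨hw, hstk⟩ := hk.stk_succ hq.le
  refine ⟨k, hik, ⟨k, hik, rfl, by omega, hloop, hk.pops⟩, hw, y, hstk, ?_⟩
  exact ⟨by omega, hq, hk.staysAbove, hexit.length_le.trans (by simp)⟩

lemma retSeg_or_f2Seg_of_forall_not_pendingPop (hexit : Exit ρ u.length i (q + 1))
    (hi : ρ.stk i = u ++ [w])
    (hop : ρ.op q = .collapse) (htop : ρ.stk q = x ++ [z ++ [Sum.inr (a, m)]])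
    (hstk : ρ.stk (q + 1) = (ρ.stk q).take m)
    (hnot : ∀ j ≥ i, ∀ y, ¬ PendingPop ρ w j q y)
    (hret : ExitsAreReturns ρ w.dropLast i q) :
    RetSeg ρ i (q + 1) ∨ (F2Seg ρ i (q + 1) ∧ HasLink w m) := by
  have hiq : i ≤ q := Nat.le_of_lt_succ hexit.lt
  have hq : q < ρ.len := hexit.le_len
  have hux : u.length ≤ x.length := by
    simpa [htop, Nat.lt_succ_iff] using hexit.staysAbove q hiq q.lt_succ_self
  have habove : StaysAbove ρ u.length i q := hexit.staysAbove.mono le_rfl le_rfl q.le_succ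
  have hz : (ρ.stk q)[x.length]? = some (z ++ [Sum.inr (a, m)]) := by simp [htop]
  rcases prefix_or_pendingPop hi hiq hq.le habove hux hz with hpre | ⟨k, y, hik, hpend, -⟩
  swap
  · exact absurd hpend (hnot k hik y)
  by_cases hw : w = z ++ [Sum.inr (a, m)]
  · subst hw
    refine .inr ⟨⟨q, hiq, rfl, hq, ?_, hop, by simp [htop, lvlS, top1, lvlOf]⟩, a, by simp⟩
    exact oneLoopSeg_of_forall_not_pendingPop hi hiq hq.le htop hexit.staysAbove hnot hret
  · have hwz : w <+: z := by simpa [List.prefix_concat_iff, hw] using hpre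
    have hm : u.length ≤ m := length_le_of_hasLink_drop hi hiq hq.le habove hux hz
      ⟨a, by simp [List.drop_append_of_le_length hwz.length_le]⟩
    have hp : ρ.stk (q + 1) = u := by
      refine hexit.stk_eq hi ?_
      rw [hstk, List.length_take]
      exact le_min hm (hexit.staysAbove q hiq q.lt_succ_self).le
    refine .inl (.collapse (hexit.retShell hi hp) hop ⟨w, z ++ [Sum.inr (a, m)], ?_, ?_, hpre, hw⟩)
    · simp [hi, top2]
    · simp [htop, top2]

lemma Exit.retSeg_or_chain (h : Exit ρ u.length i p) (hi : ρ.stk i = u ++ [w])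
    (hw : ∀ m, HasLink w m → m ≤ b) (hb : b ≤ u.length) :
    RetSeg ρ i p ∨ (Chain ρ i p ∧ (ρ.stk p).length ≤ b) := by
  induction hN : p - i using Nat.strong_induction_on generalizing i p u w with
  | h N ih =>
  obtain ⟨q, rfl⟩ : ∃ q, p = q + 1 := ⟨p - 1, by have := h.lt; omega⟩
  have hiq : i ≤ q := Nat.le_of_lt_succ h.lt
  have hlt : u.length < (ρ.stk q).length := h.staysAbove q hiq q.lt_succ_self
  have hw' : ∀ m, HasLink w.dropLast m → m ≤ b := fun m hm =>
    hw m (hm.mono (List.dropLast_subset w))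
  have hret : ExitsAreReturns ρ w.dropLast i q := by
    intro j m y hij hmq hj hexit
    have hjm : j < m := hexit.lt
    have huy : u.length ≤ y.length := by
      simpa [hj, Nat.lt_succ_iff] using h.staysAbove j hij (by omega)
    refine (ih _ (by omega) hexit hj hw' (hb.trans huy) rfl).resolve_right fun hchain => ?_
    exact (h.staysAbove m (by omega) (by omega)).not_ge (hchain.2.trans hb)
  rcases pop2_or_collapse_of_length_lt (ρ.applyOp_eq h.le_len) (h.length_le.trans_lt hlt) with
    ⟨hop, hlen⟩ | ⟨hop, y, z, a, m, htop, hstk⟩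
  · exact .inl (.pop2 (h.retShell hi (h.stk_eq hi (by omega))) hop)
  by_cases hpend : ∃ k ≥ i, ∃ x, PendingPop ρ w k q x
  · obtain ⟨k, hik, hF3, hlen, y, hk, hexit⟩ := exists_f3Seg_of_pendingPop h hi hret hpend
    exact (ih _ (by omega) hexit hk hw' (hb.trans (by simp)) rfl).imp
      (fun hret => hret.of_pop1 h hi (by omega) hlen hk)
      (fun ⟨hchain, hle⟩ => ⟨hchain.head hF3, hle⟩)
  · push Not at hpend
    refine (retSeg_or_f2Seg_of_forall_not_pendingPop h hi hop htop hstk hpend hret).imp_right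
      fun ⟨hF2, hlink⟩ => ⟨⟨i, .refl, hF2⟩, ?_⟩
    rw [hstk]
    exact (List.length_take_le _ _).trans (hw m hlink)

end FirstExit

/-! ## Decompositions into returns and chains -/

/-- A block is a return or a chain; a decomposition into the forms F1, F2, F3 is the same as a
decomposition into blocks. -/
def Block {S : CPS Q A Γ} (ρ : Run S) (i p : ℕ) : Prop := RetSeg ρ i p ∨ Chain ρ i p

section Blocks

variable {S : CPS Q A Γ} {ρ : Run S} {x : Stack2 A} {w : Word A} {b i j k p : ℕ}

lemma OneLoopSeg.stk_eq (h : OneLoopSeg ρ i k) (hi : ρ.stk i = x ++ [w]) :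
    StaysAbove ρ x.length i (k + 1) ∧ ∃ y, ρ.stk k = x ++ y ++ [w] := by
  obtain ⟨-, -, x', w', y, hi', hk, habove, -⟩ := h
  obtain ⟨rfl, hw⟩ := List.append_inj' (hi'.symm.trans hi) rfl
  obtain rfl : w' = w := List.singleton_inj.1 hw
  exact ⟨fun l hil hlk => habove l hil (Nat.le_of_lt_succ hlk), y, hk⟩

lemma F3Seg.stk_eq (h : F3Seg ρ i k) (hi : ρ.stk i = x ++ [w]) :
    StaysAbove ρ x.length i k ∧ ∃ y, ρ.stk k = x ++ y ++ [w.dropLast] := by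
  obtain ⟨m, -, rfl, hm, hloop, hpops⟩ := h
  obtain ⟨habove, y, hy⟩ := hloop.stk_eq hi
  have hpop := pop1_eq_of_popsLetter hpops (ρ.applyOp_eq hm)
  rw [hy, pop1_append_eq_some_iff] at hpop
  exact ⟨habove, y, hpop.2⟩

lemma F2Seg.exit (h : F2Seg ρ i p) (hi : ρ.stk i = x ++ [w]) (hw : ∀ m, HasLink w m → m ≤ b)
    (hb : b ≤ x.length) : Exit ρ b i p := by
  obtain ⟨m, him, rfl, hm, hloop, hop, hlvl⟩ := h
  obtain ⟨habove, y, hy⟩ := hloop.stk_eq hi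
  have hstep := ρ.applyOp_eq hm
  rw [hop, hy] at hstep
  rw [hy] at hlvl
  obtain ⟨l, hl, hstk⟩ := exists_hasLink_of_collapse hlvl hstep
  refine ⟨Nat.lt_succ_of_le him, hm, habove.mono hb le_rfl le_rfl, ?_⟩
  rw [hstk]
  exact (List.length_take_le _ _).trans (hw l hl)

lemma Chain.exit (h : Chain ρ i p) (hi : ρ.stk i = x ++ [w]) (hw : ∀ m, HasLink w m → m ≤ b)
    (hb : b ≤ x.length) : Exit ρ b i p := by
  obtain ⟨k, hik, hF2⟩ := h
  induction hik using Relation.ReflTransGen.head_induction_on generalizing x w with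
  | refl => exact hF2.exit hi hw hb
  | head hij _ ih =>
    obtain ⟨habove, y, hj⟩ := hij.stk_eq hi
    have hw' : ∀ m, HasLink w.dropLast m → m ≤ b := fun m hm =>
      hw m (hm.mono (List.dropLast_subset w))
    refine (ih hj hw' (hb.trans (by simp))).prepend ?_ (habove.mono hb le_rfl le_rfl)
    obtain ⟨m, him, rfl, -⟩ := hij
    exact him.trans m.le_succ

lemma Chain.exists_stk_eq (h : Chain ρ i p) : ∃ x w, ρ.stk i = x ++ [w] := by
  obtain ⟨k, hik, _, -, -, -, ⟨-, -, x, w, -, hk, -⟩, -⟩ := h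
  rcases hik.cases_head with rfl | ⟨j, ⟨_, -, -, -, ⟨-, -, x, w, -, hi, -⟩, -⟩, -⟩
  · exact ⟨x, w, hk⟩
  · exact ⟨x, w, hi⟩

lemma Block.exit (h : Block ρ i p) (hi : LinksBounded (ρ.stk i)) :
    Exit ρ (ρ.stk p).length i p := by
  rcases h with h | h
  · exact h.exit
  · obtain ⟨x, w, hx⟩ := h.exists_stk_eq
    exact (h.exit hx (fun m hm => (hx ▸ hi).le_length hm) le_rfl).at_length

lemma staysAbove_of_blocks (h : Relation.ReflTransGen (Block ρ) i j) (hi : LinksBounded (ρ.stk i)) :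
    StaysAbove ρ (ρ.stk j).length i j ∧ (ρ.stk j).length ≤ (ρ.stk i).length := by
  induction h using Relation.ReflTransGen.head_induction_on with
  | refl => exact ⟨fun k hjk hkj => absurd hkj hjk.not_gt, le_rfl⟩
  | head hik _ ih =>
    have hexit := hik.exit hi
    obtain ⟨habove, hle⟩ := ih (linksBounded_stk hexit.lt.le hexit.le_len hi)
    exact ⟨(hexit.staysAbove.mono hle le_rfl le_rfl).trans habove,
      hle.trans (hexit.staysAbove _ le_rfl hexit.lt).le⟩

lemma blocks_of_staysAbove (h : StaysAbove ρ (ρ.stk j).length i j) (hij : i ≤ j) (hj : j ≤ ρ.len)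
    (hi : LinksBounded (ρ.stk i)) : Relation.ReflTransGen (Block ρ) i j := by
  induction hN : j - i using Nat.strong_induction_on generalizing i with
  | h N ih =>
  rcases hij.eq_or_lt with rfl | hij
  · exact .refl
  have hlt : (ρ.stk j).length < (ρ.stk i).length := h i le_rfl hij
  obtain ⟨u, w, hu⟩ : ∃ u w, ρ.stk i = u ++ [w] := by
    have hne : ρ.stk i ≠ [] := List.ne_nil_of_length_pos (by omega)
    simpa using (List.eq_nil_or_concat (ρ.stk i)).resolve_left hne
  have hju : (ρ.stk j).length ≤ u.length := by simpa [hu, Nat.lt_succ_iff] using hlt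
  obtain ⟨p, hpj, hp⟩ : ∃ p ≤ j, Exit ρ u.length i p :=
    (staysAbove_or_exists_exit (by simp [hu]) hj).resolve_left fun habove =>
      (habove j hij.le j.lt_succ_self).not_ge hju
  have hblock : Block ρ i p :=
    (hp.retSeg_or_chain hu (fun m hm => (hu ▸ hi).le_length hm) le_rfl).imp_right And.left
  have hip : i < p := hp.lt
  refine .head hblock (ih _ (by omega) (h.mono le_rfl hip.le le_rfl) hpj ?_ rfl)
  exact linksBounded_stk hip.le hp.le_len hi

end Blocks

section Segmentations

variable {S : CPS Q A Γ} {ρ : Run S} {idx : ℕ → ℕ} {n l i j k p : ℕ}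

/-- The `l`-th of the `n` segments cut out by `idx` has form F2, or form F3 and is followed by
further segments of form F3 up to one of form F2: forms F2 and F3 with the side condition of F3. -/
def StartsChain (ρ : Run S) (n : ℕ) (idx : ℕ → ℕ) (l : ℕ) : Prop :=
  ∃ j, l ≤ j ∧ j < n ∧ F2Seg ρ (idx j) (idx (j + 1)) ∧
    ∀ k, l ≤ k → k < j → F3Seg ρ (idx k) (idx (k + 1))

/-- `idx` cuts the part of `ρ` from position `i` on into `n` segments of the forms F1, F2, F3. -/
structure Segmentation (ρ : Run S) (i n : ℕ) (idx : ℕ → ℕ) : Prop where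
  zero : idx 0 = i
  last : idx n = ρ.len
  le_succ : ∀ l < n, idx l ≤ idx (l + 1)
  form : ∀ l < n, RetSeg ρ (idx l) (idx (l + 1)) ∨ StartsChain ρ n idx l

lemma startsChain_iff (hl : l < n) :
    StartsChain ρ n idx l ↔ F2Seg ρ (idx l) (idx (l + 1)) ∨
      (F3Seg ρ (idx l) (idx (l + 1)) ∧ ∃ j, l < j ∧ j < n ∧ F2Seg ρ (idx j) (idx (j + 1)) ∧
        ∀ k, l < k → k < j → F3Seg ρ (idx k) (idx (k + 1))) := by
  constructor
  · rintro ⟨j, hlj, hjn, hF2, hF3⟩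
    rcases hlj.eq_or_lt with rfl | hlj
    · exact .inl hF2
    · exact .inr ⟨hF3 l le_rfl hlj, j, hlj, hjn, hF2, fun k hlk => hF3 k hlk.le⟩
  · rintro (hF2 | ⟨hF3, j, hlj, hjn, hF2, hF3'⟩)
    · exact ⟨l, le_rfl, hl, hF2, fun k hlk hkl => absurd hkl hlk.not_gt⟩
    · refine ⟨j, hlj.le, hjn, hF2, fun k hlk hkj => ?_⟩
      rcases hlk.eq_or_lt with rfl | hlk
      exacts [hF3, hF3' k hlk hkj]

lemma formDecomp_iff_exists_segmentation :
    FormDecomp ρ ↔ ∃ n idx, Segmentation ρ 0 n idx := by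
  refine exists_congr fun n => exists_congr fun idx => ⟨fun ⟨h0, hn, hle, hform⟩ => ?_, fun h => ?_⟩
  · exact ⟨h0, hn, hle, fun l hl => (hform l hl).imp_right (startsChain_iff hl).2⟩
  · exact ⟨h.zero, h.last, h.le_succ, fun l hl => (h.form l hl).imp_right (startsChain_iff hl).1⟩

lemma Segmentation.blocks (h : Segmentation ρ i n idx) (hl : l ≤ n) :
    Relation.ReflTransGen (Block ρ) (idx l) ρ.len := by
  induction hN : n - l using Nat.strong_induction_on generalizing l with
  | h N ih =>
  rcases hl.eq_or_lt with rfl | hl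
  · rw [h.last]
  rcases h.form l hl with hret | ⟨j, hlj, hjn, hF2, hF3⟩
  · exact .head (.inl hret) (ih _ (by omega) (Nat.succ_le_of_lt hl) rfl)
  · have hchain : Relation.ReflTransGen (F3Seg ρ) (idx l) (idx j) :=
      (reflTransGen_of_succ_of_le (fun a b => F3Seg ρ (idx a) (idx b))
        (fun k hk => hF3 k hk.1 hk.2) hlj).lift idx fun _ _ => id
    exact .head (.inr ⟨_, hchain, hF2⟩) (ih _ (by omega) (Nat.succ_le_of_lt hjn) rfl)

/-- The sequence `i, idx 0, idx 1, …`. -/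
def consIdx (i : ℕ) (idx : ℕ → ℕ) : ℕ → ℕ
  | 0 => i
  | l + 1 => idx l

lemma StartsChain.cons (h : StartsChain ρ n idx l) :
    StartsChain ρ (n + 1) (consIdx i idx) (l + 1) := by
  obtain ⟨j, hlj, hjn, hF2, hF3⟩ := h
  refine ⟨j + 1, by omega, by omega, hF2, fun k hlk hkj => ?_⟩
  obtain ⟨k, rfl⟩ : ∃ k', k = k' + 1 := ⟨k - 1, by omega⟩
  exact hF3 k (by omega) (by omega)

lemma Segmentation.cons (h : Segmentation ρ p n idx) (hip : i ≤ p)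
    (hhead : RetSeg ρ i p ∨ StartsChain ρ (n + 1) (consIdx i idx) 0) :
    Segmentation ρ i (n + 1) (consIdx i idx) where
  zero := rfl
  last := h.last
  le_succ
    | 0, _ => hip.trans_eq h.zero.symm
    | l + 1, hl => h.le_succ l (Nat.lt_of_succ_lt_succ hl)
  form
    | 0, _ => hhead.imp_left fun hret => show RetSeg ρ i (idx 0) from h.zero.symm ▸ hret
    | l + 1, hl => (h.form l (Nat.lt_of_succ_lt_succ hl)).imp_right .cons

lemma Segmentation.cons_f2Seg (h : Segmentation ρ p n idx) (hF2 : F2Seg ρ i p) :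
    Segmentation ρ i (n + 1) (consIdx i idx) ∧ StartsChain ρ (n + 1) (consIdx i idx) 0 := by
  have hstart : StartsChain ρ (n + 1) (consIdx i idx) 0 :=
    (startsChain_iff n.succ_pos).2 (.inl (show F2Seg ρ i (idx 0) from h.zero.symm ▸ hF2))
  obtain ⟨m, him, rfl, -⟩ := hF2
  exact ⟨h.cons (by omega) (.inr hstart), hstart⟩

lemma Segmentation.cons_f3Seg (h : Segmentation ρ p n idx) (hstart : StartsChain ρ n idx 0)
    (hF3 : F3Seg ρ i p) :
    Segmentation ρ i (n + 1) (consIdx i idx) ∧ StartsChain ρ (n + 1) (consIdx i idx) 0 := by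
  have hstart : StartsChain ρ (n + 1) (consIdx i idx) 0 := by
    obtain ⟨j, -, hjn, hF2, hF3'⟩ := hstart
    refine ⟨j + 1, Nat.zero_le _, Nat.succ_lt_succ hjn, hF2, fun k _ hkj => ?_⟩
    cases k with
    | zero => exact (h.zero.symm ▸ hF3 : F3Seg ρ i (idx 0))
    | succ k => exact hF3' k k.zero_le (Nat.lt_of_succ_lt_succ hkj)
  obtain ⟨m, him, rfl, -⟩ := hF3
  exact ⟨h.cons (by omega) (.inr hstart), hstart⟩

lemma Segmentation.exists_cons_block (h : Segmentation ρ p n idx) (hblock : Block ρ i p) :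
    ∃ n idx, Segmentation ρ i n idx := by
  rcases hblock with hret | ⟨k, hik, hF2⟩
  · exact ⟨_, _, h.cons hret.exit.lt.le (.inl hret)⟩
  · suffices ∃ n idx, Segmentation ρ i n idx ∧ StartsChain ρ n idx 0 by
      obtain ⟨n, idx, h, -⟩ := this
      exact ⟨n, idx, h⟩
    induction hik using Relation.ReflTransGen.head_induction_on with
    | refl => exact ⟨_, _, h.cons_f2Seg hF2⟩
    | head hF3 _ ih =>
      obtain ⟨n, idx, h, hstart⟩ := ih
      exact ⟨_, _, h.cons_f3Seg hstart hF3⟩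

lemma exists_segmentation_of_blocks (h : Relation.ReflTransGen (Block ρ) i ρ.len) :
    ∃ n idx, Segmentation ρ i n idx := by
  induction h using Relation.ReflTransGen.head_induction_on with
  | refl => exact ⟨0, fun _ => ρ.len, rfl, rfl, by simp, by simp⟩
  | head hblock _ ih =>
    obtain ⟨n, idx, h⟩ := ih
    exact h.exists_cons_block hblock

lemma formDecomp_iff_blocks : FormDecomp ρ ↔ Relation.ReflTransGen (Block ρ) 0 ρ.len := by
  rw [formDecomp_iff_exists_segmentation]
  refine ⟨fun ⟨n, idx, h⟩ => ?_, exists_segmentation_of_blocks⟩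
  simpa [h.zero] using h.blocks n.zero_le

end Segmentations

theorem form_decomposition_general {S : CPS Q A Γ} (ρ : Run S) (hρ : LinksBounded (ρ.stk 0)) :
    FormDecomp ρ ↔ ρ.stk ρ.len <+: ρ.stk 0 ∧
      ∀ i, i < ρ.len → ¬ Substack (ρ.stk i) (ρ.stk ρ.len) := by
  have hblocks : FormDecomp ρ ↔ StaysAbove ρ (ρ.stk ρ.len).length 0 ρ.len := by
    rw [formDecomp_iff_blocks]
    exact ⟨fun h => (staysAbove_of_blocks h hρ).1,
      fun h => blocks_of_staysAbove h ρ.len.zero_le le_rfl hρ⟩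
  have hpre (h : FormDecomp ρ) : ρ.stk ρ.len <+: ρ.stk 0 :=
    (hblocks.1 h).isPrefix ρ.len.zero_le le_rfl
  rw [← and_iff_right_of_imp hpre]
  refine and_congr_right fun hpre => ?_
  rw [hblocks, ← forall_not_substack_iff le_rfl hpre]
  simp

/-- For `s' = Pop₂ᵏ(s)`, a run `ρ ∈ Runs(s,s')` does not visit a
substack of `s'` before its final configuration iff it decomposes into segments of
the forms F1, F2, F3. -/
theorem form_decomposition
    {Q A Γ : Type} [DecidableEq A] (S : CPS Q A Γ)
    (s s' : Stack2 A) (hs : IsStack S.bot s)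
    (k : ℕ) (hss' : iter pop2 k s = some s')
    (ρ : Run S) :
    (ρ.stk 0 = s ∧ ρ.stk ρ.len = s' ∧ ∀ i, i < ρ.len → ¬ Substack (ρ.stk i) s') ↔
    (ρ.stk 0 = s ∧ ρ.stk ρ.len = s' ∧ FormDecomp ρ) := by
  refine and_congr_right fun hstart => and_congr_right fun hend => ?_
  subst hstart hend
  rw [form_decomposition_general ρ hs.linksBounded, and_iff_right (prefix_of_iter_pop2 hss')]

end CPG
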